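/- Let X ⊂ P^n be an irreducible hypersurface over ℂ of degree d, and let S ⊂ X be an irreducible subvariety with dim S = 2d - 1. Then for any two distinct points p, q ∈ X there exists a point z ∈ S, z ≠ p, z ≠ q, such that both lines l_{zp} and l_{zq} (joining z to p and to q) are contained in X. -/

import Mathlib

open MvPolynomial

noncomputable section

/-- Complex projective `n`-space, as the projectivization of `ℂ^{n+1}`. -/
abbrev Pn (n : ℕ) := Projectivization ℂ (Fin (n + 1) → ℂ)

/-- The common zero locus in `ℙ^n` of a set of polynomials: the points all of whose
homogeneous representatives are zeros of every polynomial in the set. -/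
def algZeroLocus (n : ℕ) (F : Set (MvPolynomial (Fin (n + 1)) ℂ)) : Set (Pn n) :=
  {p | ∀ f ∈ F, ∀ v : Fin (n + 1) → ℂ, v ∈ Projectivization.submodule p → eval v f = 0}

/-- A subset of `ℙ^n` is (Zariski-)closed if it is the common zero locus of a set of
polynomials. -/
def IsAlgClosedSet (n : ℕ) (S : Set (Pn n)) : Prop :=
  ∃ F, S = algZeroLocus n F

/-- A subset of `ℙ^n` is an irreducible variety if it is nonempty and cannot be covered by
two closed sets without being contained in one of them. -/
def IsIrrVariety (n : ℕ) (S : Set (Pn n)) : Prop :=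
  S.Nonempty ∧ ∀ C₁ C₂ : Set (Pn n), IsAlgClosedSet n C₁ → IsAlgClosedSet n C₂ →
    S ⊆ C₁ ∪ C₂ → S ⊆ C₁ ∨ S ⊆ C₂

/-- The dimension of a subset of `ℙ^n`: the supremum of lengths of strictly increasing chains
of irreducible closed subvarieties contained in it. -/
def algDim (n : ℕ) (S : Set (Pn n)) : ℕ∞ :=
  sSup {m : ℕ∞ | ∃ k : ℕ, m = (k : ℕ∞) ∧ ∃ c : Fin (k + 1) → Set (Pn n),
    StrictMono c ∧ ∀ i, IsAlgClosedSet n (c i) ∧ IsIrrVariety n (c i) ∧ c i ⊆ S}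

/-- The projective line (or point) spanned by two points of `ℙ^n`. -/
def lineThrough (n : ℕ) (p q : Pn n) : Set (Pn n) :=
  {x | Projectivization.submodule x ≤ Projectivization.submodule p ⊔ Projectivization.submodule q}

/-- A line in `ℙ^n`: the projectivization of a 2-dimensional linear subspace. -/
def IsLine (n : ℕ) (l : Set (Pn n)) : Prop :=
  ∃ W : Submodule ℂ (Fin (n + 1) → ℂ), Module.finrank ℂ W = 2 ∧
    l = {x | Projectivization.submodule x ≤ W}

/-- The linear span in `ℙ^n` of an effective divisor (a multiset of points). -/
def linSpan (n : ℕ) (D : Multiset (Pn n)) : Set (Pn n) :=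
  {x | Projectivization.submodule x ≤
    Submodule.span ℂ (⋃ p ∈ {p : Pn n | p ∈ D}, (Projectivization.submodule p : Set (Fin (n + 1) → ℂ)))}

/-- The `r`-th secant variety of a subset `C` of `ℙ^n`: the union of the linear spans of all
effective divisors of degree `r` supported on `C`. -/
def secantVariety (n : ℕ) (r : ℕ) (C : Set (Pn n)) : Set (Pn n) :=
  ⋃ D ∈ {D : Multiset (Pn n) | Multiset.card D = r ∧ ∀ p ∈ D, p ∈ C}, linSpan n D

end

/-!
Expanding `F (a z + b p)` in powers of `b` gives the polars of `F` with respect to `p`, evaluated at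
`z`; the extreme coefficients vanish for `z, p ∈ X`, so the line `l_{zp}` lies in `X` as soon as
the intermediate polars vanish at `z`. For two points `p`, `q` these are `2 (d - 1)` forms, and one
linear form vanishing at neither point makes a common zero different from both.

These `2 d - 1` forms of positive degree have a common zero on `S`, of dimension at least `2 d - 1`:
otherwise the affine cone over `S` meets their zero locus only in its vertex, whose ideal is then,
by the Nullstellensatz, a minimal prime over the ideal of the cone and the forms. By Krull's height
theorem chains of primes from the ideal of the cone to that of the vertex have length at most
`2 d - 1`, whereas the cones over a chain of subvarieties of `S`, together with the vertex, give a
chain of length `2 d`.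
-/

section KrullHeight

variable {R : Type*} [CommRing R] [IsNoetherianRing R]

lemma height_map_quotientMk_le_encard {I P : Ideal R} {s : Set R}
    (hP : P ∈ (I ⊔ Ideal.span s).minimalPrimes) :
    (P.map (Ideal.Quotient.mk I)).height ≤ s.encard := by
  obtain hs | hs := s.finite_or_infinite
  · have hmin : P.map (Ideal.Quotient.mk I) ∈
        (Ideal.span (Ideal.Quotient.mk I '' s)).minimalPrimes := by
      rw [← Ideal.map_span, Ideal.minimalPrimes_map_of_surjective Ideal.Quotient.mk_surjective,
        Ideal.mk_ker, sup_comm]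
      exact ⟨P, hP, rfl⟩
    refine (Ideal.height_le_card_of_mem_minimalPrimes_span (hs.image _) hmin).trans ?_
    rw [(hs.image _).cast_ncard_eq]
    exact Set.encard_image_le _ _
  · simp [hs.encard_eq]

theorem ltSeries_length_le_encard {s : Set R} (p : LTSeries (PrimeSpectrum R))
    (hp : p.last.asIdeal ∈ (p.head.asIdeal ⊔ Ideal.span s).minimalPrimes) :
    (p.length : ℕ∞) ≤ s.encard := by
  let e := p.head.asIdeal.primeSpectrumQuotientOrderIsoZeroLocus.symm
  let q : LTSeries (PrimeSpectrum (R ⧸ p.head.asIdeal)) :=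
    LTSeries.mk p.length (fun i => e ⟨p i, LTSeries.head_le p i⟩)
      fun i j hij => e.strictMono (p.strictMono hij)
  have hq := Order.length_le_height_last (p := q)
  rw [← PrimeSpectrum.height_eq_orderHeight] at hq
  exact hq.trans (height_map_quotientMk_le_encard hp)

end KrullHeight

section VanishingIdeal

variable {σ K : Type*} [Field K]

lemma vanishingIdeal_singleton_mem_minimalPrimes [Finite σ] [IsAlgClosed K]
    {I : Ideal (MvPolynomial σ K)} {x : σ → K} (hI : zeroLocus K I = {x}) :
    vanishingIdeal K {x} ∈ I.minimalPrimes := by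
  have h : vanishingIdeal K {x} = I.radical := by
    rw [← vanishingIdeal_zeroLocus_eq_radical (K := K), hI]
  rw [← Ideal.radical_minimalPrimes, ← h, Ideal.minimalPrimes_eq_subsingleton_self]
  rfl

lemma smul_mem_zeroLocus_vanishingIdeal {V : Set (σ → K)} {a : K} (hV : ∀ v ∈ V, a • v ∈ V)
    {v : σ → K} (hv : v ∈ zeroLocus K (vanishingIdeal K V)) :
    a • v ∈ zeroLocus K (vanishingIdeal K V) := by
  have dilate (w : σ → K) (f : MvPolynomial σ K) :
      aeval w (bind₁ (fun i => C a * X i) f) = aeval (a • w) f := by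
    simp [aeval_bind₁, Pi.smul_def]
  intro f hf
  rw [← dilate]
  refine hv _ fun w hw => ?_
  rw [dilate]
  exact hf _ (hV w hw)

end VanishingIdeal

section Polar

variable {σ R : Type*} [CommSemiring R]

/-- The restriction of polynomials to the parametrized line `t ↦ v + t p`. -/
noncomputable def lineRestrict (v p : σ → R) : MvPolynomial σ R →ₐ[R] Polynomial R :=
  aeval fun i => Polynomial.C (v i) + Polynomial.C (p i) * Polynomial.X

lemma eval_lineRestrict (v p : σ → R) (t : R) (F : MvPolynomial σ R) :
    (lineRestrict v p F).eval t = eval (v + t • p) F := by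
  have h : (Polynomial.aeval t).comp (lineRestrict v p) = aeval (v + t • p) := by
    ext i
    simp [lineRestrict, mul_comm t]
  simpa [aeval_eq_eval] using DFunLike.congr_fun h F

lemma natDegree_lineRestrict_le (v p : σ → R) (F : MvPolynomial σ R) :
    (lineRestrict v p F).natDegree ≤ F.totalDegree := by
  have h := aeval_natDegree_le (n := 1) F le_rfl
    (fun i => Polynomial.C (v i) + Polynomial.C (p i) * Polynomial.X) fun i => by compute_degree
  rwa [mul_one] at h

lemma eval_smul_of_isHomogeneous {d : ℕ} {F : MvPolynomial σ R} (hF : F.IsHomogeneous d)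
    (a : R) (v : σ → R) : eval (a • v) F = a ^ d * eval v F := by
  rw [eval_eq, eval_eq, Finset.mul_sum]
  refine Finset.sum_congr rfl fun m hm => ?_
  have hdeg : ∑ i ∈ m.support, m i = d := by
    rw [← hF (mem_support_iff.1 hm), Finsupp.weight_apply]
    simp [Finsupp.sum]
  simp only [Pi.smul_apply, smul_eq_mul, mul_pow, Finset.prod_mul_distrib,
    Finset.prod_pow_eq_pow_sum, hdeg]
  ring

variable [Fintype σ]

/-- The `j`-th polar of `F` with respect to `p`: the `j`-th iterated derivative of `F` in the
direction `p`. -/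
noncomputable def polar (p : σ → R) (j : ℕ) (F : MvPolynomial σ R) : MvPolynomial σ R :=
  (fun G => ∑ i, C (p i) * pderiv i G)^[j] F

lemma isHomogeneous_polar {d : ℕ} {F : MvPolynomial σ R} (hF : F.IsHomogeneous d) (p : σ → R)
    (j : ℕ) : (polar p j F).IsHomogeneous (d - j) := by
  induction j with
  | zero => exact hF
  | succ j ih =>
    rw [polar, Function.iterate_succ_apply']
    exact IsHomogeneous.sum _ _ _ fun i _ => ih.pderiv.C_mul _

lemma derivative_lineRestrict (v p : σ → R) (F : MvPolynomial σ R) :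
    (lineRestrict v p F).derivative = lineRestrict v p (∑ i, C (p i) * pderiv i F) := by
  classical
  induction F using MvPolynomial.induction_on with
  | C a => simp [lineRestrict, Polynomial.algebraMap_eq]
  | add f g hf hg => simp only [map_add, mul_add, Finset.sum_add_distrib, hf, hg]
  | mul_X f i hf =>
    have hX : (lineRestrict v p (X i)).derivative = lineRestrict v p (C (p i)) := by
      simp [lineRestrict, Polynomial.algebraMap_eq]
    have hleibniz : ∑ k, C (p k) * pderiv k (f * X i) =
        (∑ k, C (p k) * pderiv k f) * X i + f * C (p i) := by
      simp only [Derivation.leibniz, pderiv_X, Pi.single_apply, smul_eq_mul, mul_add,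
        Finset.sum_add_distrib, Finset.sum_mul, mul_ite, mul_one, mul_zero, Finset.sum_ite_eq,
        Finset.mem_univ, if_true]
      simp only [mul_comm (X i), mul_assoc]
      ring
    rw [hleibniz, map_mul, Polynomial.derivative_mul, hf, hX, map_add, map_mul, map_mul]

lemma iterate_derivative_lineRestrict (v p : σ → R) (j : ℕ) (F : MvPolynomial σ R) :
    Polynomial.derivative^[j] (lineRestrict v p F) = lineRestrict v p (polar p j F) := by
  induction j with
  | zero => rfl
  | succ j ih =>
    rw [Function.iterate_succ_apply', ih, derivative_lineRestrict, polar, polar,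
      Function.iterate_succ_apply']

lemma factorial_nsmul_coeff_lineRestrict (v p : σ → R) (j : ℕ) (F : MvPolynomial σ R) :
    j.factorial • (lineRestrict v p F).coeff j = eval v (polar p j F) := by
  have h := Polynomial.coeff_iterate_derivative (k := j) (lineRestrict v p F) 0
  rw [iterate_derivative_lineRestrict, Polynomial.coeff_zero_eq_eval_zero, eval_lineRestrict,
    zero_smul, add_zero, zero_add, Nat.descFactorial_self] at h
  exact h.symm

end Polar

section PolarField

variable {σ K : Type*} [Fintype σ] [Field K] [CharZero K] {d : ℕ} {F : MvPolynomial σ K}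

lemma eval_smul_add_smul (hF : F.IsHomogeneous d) (v p : σ → K) (a b : K) :
    eval (a • v + b • p) F =
      ∑ j ∈ Finset.range (d + 1), a ^ (d - j) * b ^ j * eval v (polar p j F) / j.factorial := by
  have hdeg : (lineRestrict (a • v) p F).natDegree < d + 1 :=
    Nat.lt_succ_of_le ((natDegree_lineRestrict_le _ _ _).trans hF.totalDegree_le)
  have hcoeff (j : ℕ) : (lineRestrict (a • v) p F).coeff j =
      a ^ (d - j) * eval v (polar p j F) / j.factorial := by
    rw [← eval_smul_of_isHomogeneous (isHomogeneous_polar hF p j),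
      ← factorial_nsmul_coeff_lineRestrict, nsmul_eq_mul,
      mul_div_cancel_left₀ _ (Nat.cast_ne_zero.2 j.factorial_ne_zero)]
  rw [← eval_lineRestrict, Polynomial.eval_eq_sum_range' hdeg]
  refine Finset.sum_congr rfl fun j _ => ?_
  rw [hcoeff]
  ring

lemma eval_smul_add_smul_eq_zero (hF : F.IsHomogeneous d) {v p : σ → K} (hv : eval v F = 0)
    (hp : eval p F = 0) (h : ∀ j, 0 < j → j < d → eval v (polar p j F) = 0) (a b : K) :
    eval (a • v + b • p) F = 0 := by
  -- The top polar is the constant `d! F(p)`: take `a = 0`, `b = 1` in the expansion.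
  have htop : eval v (polar p d F) = 0 := by
    have hsum := eval_smul_add_smul hF v p 0 1
    rw [zero_smul, zero_add, one_smul, hp, Finset.sum_eq_single_of_mem d (by simp)] at hsum
    · simpa [Nat.factorial_ne_zero] using hsum.symm
    · intro j hj hjd
      have : d - j ≠ 0 := by grind
      simp [this]
  rw [eval_smul_add_smul hF]
  refine Finset.sum_eq_zero fun j hj => ?_
  have hj : eval v (polar p j F) = 0 := by
    obtain rfl | hj0 := j.eq_zero_or_pos
    · exact hv
    obtain rfl | hjd := (Nat.le_of_lt_succ (Finset.mem_range.1 hj)).eq_or_lt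
    exacts [htop, h j hj0 hjd]
  simp [hj]

end PolarField

lemma exists_isHomogeneous_one_forall_eval_ne_zero {σ K ι : Type*} [Finite σ] [Field K]
    [Infinite K] [Finite ι] (v : ι → σ → K) (hv : ∀ i, v i ≠ 0) :
    ∃ l : MvPolynomial σ K, l.IsHomogeneous 1 ∧ ∀ i, eval (v i) l ≠ 0 := by
  classical
  have := Fintype.ofFinite σ
  obtain ⟨f, hf⟩ := Module.exists_dual_forall_apply_ne_zero (K := K) v hv
  refine ⟨∑ j, C (f (Pi.single j 1)) * X j,
    IsHomogeneous.sum _ _ _ fun j _ => isHomogeneous_C_mul_X _ _, fun i => ?_⟩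
  have heval : eval (v i) (∑ j, C (f (Pi.single j 1)) * X j) = f (v i) := by
    conv_rhs => rw [pi_eq_sum_univ' (v i), map_sum]
    simp [mul_comm]
  rw [heval]
  exact hf i

section Cone

variable {n : ℕ} {S T : Set (Pn n)} {f g : MvPolynomial (Fin (n + 1)) ℂ}

lemma mem_submodule_iff_exists_smul_rep {z : Pn n} {v : Fin (n + 1) → ℂ} :
    v ∈ Projectivization.submodule z ↔ ∃ a : ℂ, a • z.rep = v := by
  rw [Projectivization.submodule_eq, Submodule.mem_span_singleton]

lemma mem_submodule_mk_iff {v w : Fin (n + 1) → ℂ} {hv : v ≠ 0} :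
    w ∈ Projectivization.submodule (Projectivization.mk ℂ v hv) ↔ ∃ a : ℂ, a • v = w := by
  rw [Projectivization.submodule_mk, Submodule.mem_span_singleton]

lemma rep_mem_submodule (z : Pn n) : z.rep ∈ Projectivization.submodule z :=
  mem_submodule_iff_exists_smul_rep.2 ⟨1, one_smul _ _⟩

lemma mem_algZeroLocus_singleton_iff {z : Pn n} :
    z ∈ algZeroLocus n {f} ↔ lineRestrict 0 z.rep f = 0 := by
  have h : z ∈ algZeroLocus n {f} ↔ ∀ a : ℂ, eval (a • z.rep) f = 0 := by
    simp [algZeroLocus, mem_submodule_iff_exists_smul_rep]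
  rw [h]
  refine ⟨fun hz => Polynomial.funext fun a => ?_, fun hz a => ?_⟩
  · rw [eval_lineRestrict, zero_add, hz, Polynomial.eval_zero]
  · rw [← zero_add (a • z.rep), ← eval_lineRestrict, hz, Polynomial.eval_zero]

lemma algZeroLocus_singleton_mul :
    algZeroLocus n {f * g} = algZeroLocus n {f} ∪ algZeroLocus n {g} := by
  ext z
  simp only [Set.mem_union, mem_algZeroLocus_singleton_iff, map_mul, mul_eq_zero]

variable (S) in
/-- The affine cone over a subset of projective space: the union of the lines through the origin
which are its points. -/
def affineCone : Set (Fin (n + 1) → ℂ) :=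
  {v | ∃ z ∈ S, v ∈ Projectivization.submodule z}

variable (S) in
/-- The ideal of a subset of projective space, encoded as the ideal of all polynomials, homogeneous
or not, vanishing on its affine cone. -/
noncomputable def coneIdeal : Ideal (MvPolynomial (Fin (n + 1)) ℂ) :=
  vanishingIdeal ℂ (affineCone S)

lemma mem_coneIdeal_iff : f ∈ coneIdeal S ↔ S ⊆ algZeroLocus n {f} := by
  simp only [coneIdeal, affineCone, mem_vanishingIdeal_iff, aeval_eq_eval]
  refine ⟨fun h z hz => ?_, fun h v ⟨z, hz, hv⟩ => h hz f rfl v hv⟩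
  rintro _ rfl v hv
  exact h v ⟨z, hz, hv⟩

lemma coneIdeal_lt_vanishingIdeal_zero (hS : S.Nonempty) :
    coneIdeal S < vanishingIdeal ℂ {(0 : Fin (n + 1) → ℂ)} := by
  obtain ⟨z, hz⟩ := hS
  refine lt_of_le_not_ge (vanishingIdeal_anti_mono ?_) fun h => z.rep_nonzero ?_
  · exact Set.singleton_subset_iff.2 ⟨z, hz, Submodule.zero_mem _⟩
  · ext i
    have hX : (X i : MvPolynomial (Fin (n + 1)) ℂ) ∈ vanishingIdeal ℂ {(0 : Fin (n + 1) → ℂ)} := by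
      simp
    simpa using mem_coneIdeal_iff.1 (h hX) hz _ rfl _ (rep_mem_submodule z)

lemma isPrime_coneIdeal (hS : IsIrrVariety n S) : (coneIdeal S).IsPrime where
  ne_top' := ((coneIdeal_lt_vanishingIdeal_zero hS.1).trans_le le_top).ne
  mem_or_mem' {f g} hfg := by
    rw [mem_coneIdeal_iff, algZeroLocus_singleton_mul] at hfg
    simpa only [mem_coneIdeal_iff] using hS.2 _ _ ⟨{f}, rfl⟩ ⟨{g}, rfl⟩ hfg

lemma algZeroLocus_coneIdeal (hS : IsAlgClosedSet n S) : algZeroLocus n (coneIdeal S) = S := by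
  obtain ⟨G, rfl⟩ := hS
  refine Set.Subset.antisymm (fun z hz g hg => hz g ?_) fun z hz f hf =>
    mem_coneIdeal_iff.1 hf hz f rfl
  rw [SetLike.mem_coe, mem_coneIdeal_iff]
  rintro z hz f rfl
  exact hz f hg

lemma coneIdeal_lt_coneIdeal (hS : IsAlgClosedSet n S) (h : S < T) :
    coneIdeal T < coneIdeal S := by
  refine lt_of_le_not_ge (fun f hf => ?_) fun hle => h.not_ge ?_
  · rw [mem_coneIdeal_iff] at hf ⊢
    exact h.le.trans hf
  · rw [← algZeroLocus_coneIdeal hS]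
    exact fun z hz f hf => mem_coneIdeal_iff.1 (hle hf) hz f rfl

lemma mk_mem_of_mem_zeroLocus_coneIdeal (hS : IsAlgClosedSet n S) {v : Fin (n + 1) → ℂ}
    (hv : v ∈ zeroLocus ℂ (coneIdeal S)) (hv0 : v ≠ 0) : Projectivization.mk ℂ v hv0 ∈ S := by
  rw [← algZeroLocus_coneIdeal hS]
  intro f hf w hw
  obtain ⟨a, rfl⟩ := mem_submodule_mk_iff.1 hw
  have hcone : ∀ u ∈ affineCone S, a • u ∈ affineCone S :=
    fun u ⟨z, hz, hu⟩ => ⟨z, hz, Submodule.smul_mem _ a hu⟩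
  exact smul_mem_zeroLocus_vanishingIdeal hcone hv f hf

end Cone

section Dimension

variable {n : ℕ} {S : Set (Pn n)} {ι : Type*} {f : ι → MvPolynomial (Fin (n + 1)) ℂ} {e : ι → ℕ}

lemma zeroLocus_coneIdeal_sup_span_range (hf : ∀ i, (f i).IsHomogeneous (e i))
    (he : ∀ i, e i ≠ 0) (hS : IsAlgClosedSet n S) (hne : S.Nonempty)
    (h : Disjoint S (algZeroLocus n (Set.range f))) :
    zeroLocus ℂ (coneIdeal S ⊔ Ideal.span (Set.range f)) = {0} := by
  ext v
  rw [Set.mem_singleton_iff]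
  constructor
  · intro hv
    by_contra hv0
    refine Set.disjoint_left.1 h (mk_mem_of_mem_zeroLocus_coneIdeal hS
      (zeroLocus_anti_mono le_sup_left hv) hv0) ?_
    rintro _ ⟨i, rfl⟩ w hw
    obtain ⟨a, rfl⟩ := mem_submodule_mk_iff.1 hw
    have hvi := hv (f i) (Ideal.mem_sup_right (Ideal.subset_span ⟨i, rfl⟩))
    rw [aeval_eq_eval] at hvi
    rw [eval_smul_of_isHomogeneous (hf i), hvi, mul_zero]
  · rintro rfl
    have hf0 (i : ι) : eval 0 (f i) = 0 := by
      simpa [he i] using eval_smul_of_isHomogeneous (hf i) 0 0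
    have hle : coneIdeal S ⊔ Ideal.span (Set.range f) ≤
        vanishingIdeal ℂ {(0 : Fin (n + 1) → ℂ)} := by
      refine sup_le (coneIdeal_lt_vanishingIdeal_zero hne).le (Ideal.span_le.2 ?_)
      rintro _ ⟨i, rfl⟩
      simpa [mem_vanishingIdeal_singleton_iff, aeval_eq_eval] using hf0 i
    exact fun g hg => hle hg 0 rfl

lemma exists_chain_of_lt_algDim {m : ℕ∞} (h : m < algDim n S) :
    ∃ k : ℕ, m < k ∧ ∃ c : Fin (k + 1) → Set (Pn n), StrictMono c ∧
      ∀ i, IsAlgClosedSet n (c i) ∧ IsIrrVariety n (c i) ∧ c i ⊆ S := by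
  obtain ⟨_, ⟨k, rfl, hc⟩, hk⟩ := lt_sSup_iff.1 h
  exact ⟨k, hk, hc⟩

lemma chain_length_lt_card [Fintype ι] (hf : ∀ i, (f i).IsHomogeneous (e i))
    (he : ∀ i, e i ≠ 0) {k : ℕ} {c : Fin (k + 1) → Set (Pn n)} (hc : StrictMono c)
    (hcl : ∀ i, IsAlgClosedSet n (c i)) (hirr : ∀ i, IsIrrVariety n (c i))
    (h : Disjoint (c (Fin.last k)) (algZeroLocus n (Set.range f))) : k < Fintype.card ι := by
  let origin : PrimeSpectrum (MvPolynomial (Fin (n + 1)) ℂ) :=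
    ⟨vanishingIdeal ℂ {(0 : Fin (n + 1) → ℂ)}, inferInstance⟩
  let p : LTSeries (PrimeSpectrum (MvPolynomial (Fin (n + 1)) ℂ)) :=
    LTSeries.mk k (fun i => ⟨coneIdeal (c i.rev), isPrime_coneIdeal (hirr _)⟩)
      fun i j hij => coneIdeal_lt_coneIdeal (hcl _) (hc (Fin.rev_lt_rev.2 hij))
  have hp : p.last < origin := coneIdeal_lt_vanishingIdeal_zero (hirr _).1
  have hhead : p.head.asIdeal = coneIdeal (c (Fin.last k)) :=
    congrArg (fun i => coneIdeal (c i)) (Fin.rev_zero k)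
  have hmin : (p.snoc origin hp).last.asIdeal ∈
      ((p.snoc origin hp).head.asIdeal ⊔ Ideal.span (Set.range f)).minimalPrimes := by
    rw [RelSeries.last_snoc, RelSeries.head_snoc, hhead]
    exact vanishingIdeal_singleton_mem_minimalPrimes
      (zeroLocus_coneIdeal_sup_span_range hf he (hcl _) (hirr _).1 h)
  have hle : ((k + 1 : ℕ) : ℕ∞) ≤ Fintype.card ι := by
    calc ((k + 1 : ℕ) : ℕ∞) ≤ (Set.range f).encard := ltSeries_length_le_encard _ hmin
      _ ≤ (Set.univ : Set ι).encard := by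
        rw [← Set.image_univ]
        exact Set.encard_image_le _ _
      _ = Fintype.card ι := by simp
  exact Nat.cast_le.1 hle

theorem nonempty_inter_algZeroLocus_range [Fintype ι] [Nonempty ι]
    (hf : ∀ i, (f i).IsHomogeneous (e i)) (he : ∀ i, e i ≠ 0)
    (hdim : (Fintype.card ι : ℕ∞) ≤ algDim n S) :
    (S ∩ algZeroLocus n (Set.range f)).Nonempty := by
  have hlt : ((Fintype.card ι - 1 : ℕ) : ℕ∞) < algDim n S :=
    lt_of_lt_of_le (Nat.cast_lt.2 (Nat.sub_one_lt Fintype.card_ne_zero)) hdim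
  obtain ⟨k, hk, c, hc, hcS⟩ := exists_chain_of_lt_algDim hlt
  have hk : Fintype.card ι ≤ k := Nat.le_of_pred_lt (Nat.cast_lt.1 hk)
  by_contra hempty
  refine hk.not_gt (chain_length_lt_card hf he hc (fun i => (hcS i).1) (fun i => (hcS i).2.1) ?_)
  rw [Set.not_nonempty_iff_eq_empty, ← Set.disjoint_iff_inter_eq_empty] at hempty
  exact hempty.mono_left (hcS _).2.2

end Dimension

lemma lineThrough_subset_algZeroLocus {n d : ℕ} {F : MvPolynomial (Fin (n + 1)) ℂ}
    (hF : F.IsHomogeneous d) {z p : Pn n} (hz : z ∈ algZeroLocus n {F})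
    (hp : p ∈ algZeroLocus n {F}) (h : ∀ j, 0 < j → j < d → eval z.rep (polar p.rep j F) = 0) :
    lineThrough n z p ⊆ algZeroLocus n {F} := by
  rintro x hx _ rfl w hw
  obtain ⟨u, hu, v, hv, rfl⟩ := Submodule.mem_sup.1 (hx hw)
  obtain ⟨a, rfl⟩ := mem_submodule_iff_exists_smul_rep.1 hu
  obtain ⟨b, rfl⟩ := mem_submodule_iff_exists_smul_rep.1 hv
  exact eval_smul_add_smul_eq_zero hF (hz _ rfl _ (rep_mem_submodule z))
    (hp _ rfl _ (rep_mem_submodule p)) h a b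

theorem stmt10_general {n d : ℕ} {F : MvPolynomial (Fin (n + 1)) ℂ}
    (hF : F.IsHomogeneous (d + 1)) {S : Set (Pn n)} (hS : S ⊆ algZeroLocus n {F})
    {ι : Type*} [Fintype ι] (hdim : ((Fintype.card ι * d + 1 : ℕ) : ℕ∞) ≤ algDim n S)
    (p : ι → Pn n) (hp : ∀ i, p i ∈ algZeroLocus n {F}) :
    ∃ z ∈ S, ∀ i, z ≠ p i ∧ lineThrough n z (p i) ⊆ algZeroLocus n {F} := by
  obtain ⟨l, hl, hlp⟩ := exists_isHomogeneous_one_forall_eval_ne_zero (fun i => (p i).rep)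
    fun i => (p i).rep_nonzero
  let f : Option (ι × Fin d) → MvPolynomial (Fin (n + 1)) ℂ
    | none => l
    | some (i, j) => polar (p i).rep (j + 1) F
  let e : Option (ι × Fin d) → ℕ
    | none => 1
    | some (_, j) => d + 1 - (j + 1)
  have hf : ∀ o, (f o).IsHomogeneous (e o)
    | none => hl
    | some (i, j) => isHomogeneous_polar hF (p i).rep (j + 1)
  have he : ∀ o, e o ≠ 0
    | none => one_ne_zero
    | some (_, j) => Nat.sub_ne_zero_of_lt (Nat.succ_lt_succ j.isLt)
  obtain ⟨z, hzS, hz⟩ := nonempty_inter_algZeroLocus_range hf he (by simpa using hdim)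
  have hzf (o) : eval z.rep (f o) = 0 := hz _ ⟨o, rfl⟩ _ (rep_mem_submodule z)
  refine ⟨z, hzS, fun i => ⟨?_, lineThrough_subset_algZeroLocus hF (hS hzS) (hp i) ?_⟩⟩
  · rintro rfl
    exact hlp i (hzf none)
  · rintro (_ | j) hj hjd
    · exact absurd hj (lt_irrefl 0)
    · exact hzf (some (i, ⟨j, Nat.lt_of_succ_lt_succ hjd⟩))

/-- Let `X ⊂ ℙ^n` be an irreducible hypersurface of degree `d` over `ℂ` and `S ⊆ X` an
irreducible closed subvariety with `dim S = 2d - 1`. Then for any two distinct points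
`p, q ∈ X` there is `z ∈ S`, `z ≠ p`, `z ≠ q`, with both lines `l_{zp}` and `l_{zq}`
contained in `X`. -/
theorem stmt10 (n d : ℕ) (hd : 1 ≤ d) (F : MvPolynomial (Fin (n + 1)) ℂ)
    (hF : F.IsHomogeneous d) (hF0 : F ≠ 0)
    (X : Set (Pn n)) (hX : X = algZeroLocus n {F}) (hXirr : IsIrrVariety n X)
    (S : Set (Pn n)) (hS : S ⊆ X) (hScl : IsAlgClosedSet n S) (hSirr : IsIrrVariety n S)
    (hSdim : algDim n S = ((2 * d - 1 : ℕ) : ℕ∞)) :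
    ∀ p ∈ X, ∀ q ∈ X, p ≠ q →
      ∃ z ∈ S, z ≠ p ∧ z ≠ q ∧ lineThrough n z p ⊆ X ∧ lineThrough n z q ⊆ X := by
  intro p hp q hq _
  subst hX
  obtain ⟨d, rfl⟩ := Nat.exists_eq_add_of_le' hd
  have hdim : ((Fintype.card (Fin 2) * d + 1 : ℕ) : ℕ∞) ≤ algDim n S := by
    rw [hSdim, Fintype.card_fin]
    exact Nat.cast_le.2 (by lia)
  obtain ⟨z, hzS, hz⟩ := stmt10_general hF hS hdim ![p, q] (Fin.forall_fin_two.2 ⟨hp, hq⟩)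
  exact ⟨z, hzS, (hz 0).1, (hz 1).1, (hz 0).2, (hz 1).2⟩
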